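/- Let q be a quadratic form over a field F of characteristic not 2, and let F'/F be a field extension of odd degree. Then the Witt index of q over F' equals the Witt index of q over F. -/

import Mathlib

open TensorProduct

/-- The Witt index of a quadratic form: the supremum of the dimensions of
totally isotropic subspaces. -/
noncomputable def wittIndex (F : Type*) [Field F] {V : Type*} [AddCommGroup V] [Module F V]
    (Q : QuadraticForm F V) : ℕ :=
  sSup {n | ∃ W : Submodule F V, (∀ x ∈ W, Q x = 0) ∧ Module.finrank F ↥W = n}

/-!
Let `q` be an anisotropic diagonal form over `F`. If `f` is a nonzero vector of polynomials, then
`q f` has even degree, because its top coefficient is the value of `q` on the vector of top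
coefficients of `f`. Suppose that an irreducible `p` of odd degree divides `q f`. Reducing `f`
modulo `p` and removing the content, we may take `f` primitive with entries of degree less than
that of `p`. The cofactor of `p` in `q f` then has odd degree smaller than that of `p`, so it has
an irreducible factor of smaller odd degree; by induction this factor divides every entry of `f`,
which is absurd. Hence `q` stays anisotropic over `F[X]/(p)` and, adjoining generators one at a
time, over every extension of odd degree.

For a maximal totally isotropic subspace `W`, any complement `A` of `W` in `Wᗮ` is anisotropic.
Orthogonal complements commute with base change, so over `F'` the orthogonal complement is again
the sum of `W` and an anisotropic subspace, and `W` remains maximal. Finally, a finite-dimensional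
maximal totally isotropic subspace has the largest dimension among all totally isotropic subspaces.
-/

section Polynomial

open Polynomial QuadraticMap

theorem dvd_map_add_smul_iff {R M : Type*} [CommRing R] [AddCommGroup M] [Module R M]
    (Q : QuadraticForm R M) (p : R) (x y : M) : p ∣ Q (x + p • y) ↔ p ∣ Q x := by
  rw [QuadraticMap.map_add Q, QuadraticMap.map_smul, polar_smul_right, add_assoc]
  refine dvd_add_left (dvd_add ?_ (Dvd.intro _ rfl))
  exact (dvd_mul_right p p).mul_right _

variable {F ι : Type*} [Field F]

theorem exists_irreducible_dvd_of_odd_natDegree {h : F[X]} (hodd : Odd h.natDegree) :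
    ∃ p, Irreducible p ∧ p ∣ h ∧ Odd p.natDegree := by
  induction hn : h.natDegree using Nat.strong_induction_on generalizing h with
  | _ n ih =>
  subst hn
  have hunit : ¬ IsUnit h := fun hu => by simp [natDegree_eq_zero_of_isUnit hu] at hodd
  have hne : h ≠ 0 := by rintro rfl; simp at hodd
  obtain ⟨p, hp, k, rfl⟩ := WfDvdMonoid.exists_irreducible_factor hunit hne
  by_cases hpodd : Odd p.natDegree
  · exact ⟨p, hp, dvd_mul_right p k, hpodd⟩
  have hdeg : (p * k).natDegree = p.natDegree + k.natDegree :=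
    natDegree_mul hp.ne_zero (right_ne_zero_of_mul hne)
  have hkodd : Odd k.natDegree := by grind
  obtain ⟨r, hr, hrk, hrodd⟩ := ih _ (by have := hp.natDegree_pos; lia) hkodd rfl
  exact ⟨r, hr, hrk.mul_left p, hrodd⟩

theorem exists_ne_zero_forall_natDegree_le {R : Type*} [Finite ι] [Semiring R] {f : ι → R[X]}
    (hf : f ≠ 0) : ∃ j, f j ≠ 0 ∧ ∀ i, (f i).natDegree ≤ (f j).natDegree := by
  obtain ⟨i₀, hi₀⟩ := Function.ne_iff.1 hf
  have : Nonempty ι := ⟨i₀⟩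
  obtain ⟨j, hj⟩ := Finite.exists_max fun i => (f i).degree
  refine ⟨j, fun h0 => hi₀ ?_, fun i => natDegree_le_natDegree (hj i)⟩
  simpa [h0] using hj i₀

theorem exists_eq_smul_primitive {R : Type*} [CommMonoidWithZero R]
    [UniqueFactorizationMonoid R] [Finite ι] [Nonempty ι] (g : ι → R) :
    ∃ (c : R) (e : ι → R), g = c • e ∧ ∀ r, (∀ i, r ∣ e i) → IsUnit r := by
  have : Fintype ι := Fintype.ofFinite ι
  have : NormalizedGCDMonoid R := Nonempty.some inferInstance
  obtain ⟨e, hge, he⟩ := Finset.extract_gcd g Finset.univ_nonempty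
  refine ⟨_, e, funext fun i => hge i (Finset.mem_univ i), fun r hr => ?_⟩
  exact isUnit_of_dvd_one (he ▸ Finset.dvd_gcd fun i _ => hr i)

theorem exists_primitive_dvd_of_dvd [Finite ι] (Q : QuadraticForm F[X] (ι → F[X])) {p : F[X]}
    (hp : Irreducible p) {f : ι → F[X]} (hdvd : p ∣ Q f) (hf : ¬ ∀ i, p ∣ f i) :
    ∃ e : ι → F[X], (∀ r, (∀ i, r ∣ e i) → IsUnit r) ∧
      (∀ i, (e i).natDegree < p.natDegree) ∧ p ∣ Q e := by
  let g : ι → F[X] := fun i => f i % p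
  have hfg : f = g + p • fun i => f i / p :=
    funext fun i => (EuclideanDomain.mod_add_div (f i) p).symm
  have hgdvd : p ∣ Q g := by rwa [hfg, dvd_map_add_smul_iff] at hdvd
  have hglt (i : ι) : (g i).natDegree < p.natDegree := natDegree_mod_lt _ hp.natDegree_pos.ne'
  obtain ⟨i₀, hi₀⟩ := not_forall.1 hf
  have hg₀ : g i₀ ≠ 0 := fun h => hi₀ (EuclideanDomain.mod_eq_zero.1 h)
  have : Nonempty ι := ⟨i₀⟩
  obtain ⟨c, e, hge, he⟩ := exists_eq_smul_primitive g
  have hgi (i : ι) : g i = c * e i := congrFun hge i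
  have hpc : ¬ p ∣ c := fun hpc =>
    (hglt i₀).not_ge (natDegree_le_of_dvd (hgi i₀ ▸ hpc.mul_right _) hg₀)
  refine ⟨e, he, fun i => ?_, ?_⟩
  · rcases eq_or_ne (e i) 0 with hei | hei
    · simpa [hei] using hp.natDegree_pos
    · have hc : c ≠ 0 := fun h => hpc (h ▸ dvd_zero p)
      exact (natDegree_le_of_dvd (Dvd.intro_left c (hgi i).symm)
        (hgi i ▸ mul_ne_zero hc hei)).trans_lt (hglt i)
  · rw [hge, QuadraticMap.map_smul, smul_eq_mul] at hgdvd
    have hpcc : ¬ p ∣ c * c := hp.prime.not_dvd_mul hpc hpc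
    exact (hp.prime.dvd_or_dvd hgdvd).resolve_left hpcc

variable [Fintype ι]

theorem natDegree_weightedSumSquares_le {R : Type*} [CommRing R] (w : ι → R) {f : ι → R[X]}
    {d : ℕ} (hf : ∀ i, (f i).natDegree ≤ d) : (weightedSumSquares R[X] w f).natDegree ≤ 2 * d := by
  rw [weightedSumSquares_apply]
  refine natDegree_sum_le_of_forall_le _ _ fun i _ => (natDegree_smul_le _ _).trans ?_
  rw [two_mul]
  exact natDegree_mul_le_of_le (hf i) (hf i)

theorem coeff_weightedSumSquares {R : Type*} [CommRing R] (w : ι → R) {f : ι → R[X]} {d : ℕ}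
    (hf : ∀ i, (f i).natDegree ≤ d) :
    (weightedSumSquares R[X] w f).coeff (2 * d) =
      weightedSumSquares R w fun i => (f i).coeff d := by
  simp only [weightedSumSquares_apply, finsetSum_coeff, coeff_smul, two_mul,
    coeff_mul_add_eq_of_natDegree_le (hf _) (hf _)]

theorem exists_natDegree_weightedSumSquares_eq {w : ι → F}
    (hw : (weightedSumSquares F w).Anisotropic) {f : ι → F[X]} (hf : f ≠ 0) :
    weightedSumSquares F[X] w f ≠ 0 ∧
      ∃ j, (weightedSumSquares F[X] w f).natDegree = 2 * (f j).natDegree := by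
  obtain ⟨j, hfj, hj⟩ := exists_ne_zero_forall_natDegree_le hf
  have hcoeff : (weightedSumSquares F[X] w f).coeff (2 * (f j).natDegree) ≠ 0 := by
    rw [coeff_weightedSumSquares w hj]
    exact fun h0 => hfj (leadingCoeff_eq_zero.1 (congrFun (hw _ h0) j))
  exact ⟨fun h0 => hcoeff (by rw [h0, coeff_zero]), j,
    (natDegree_weightedSumSquares_le w hj).antisymm (le_natDegree_of_ne_zero hcoeff)⟩

theorem exists_irreducible_dvd_weightedSumSquares_of_natDegree_lt {w : ι → F}
    (hw : (weightedSumSquares F w).Anisotropic) {p : F[X]} (hodd : Odd p.natDegree) {f : ι → F[X]}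
    (hf : f ≠ 0) (hlt : ∀ i, (f i).natDegree < p.natDegree)
    (hdvd : p ∣ weightedSumSquares F[X] w f) :
    ∃ r, Irreducible r ∧ Odd r.natDegree ∧ r.natDegree < p.natDegree ∧
      r ∣ weightedSumSquares F[X] w f := by
  obtain ⟨hne, j, hdeg⟩ := exists_natDegree_weightedSumSquares_eq hw hf
  obtain ⟨h, hph⟩ := hdvd
  rw [hph] at hne hdeg ⊢
  have hh : h ≠ 0 := right_ne_zero_of_mul hne
  rw [natDegree_mul (left_ne_zero_of_mul hne) hh] at hdeg
  have hhodd : Odd h.natDegree := by grind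
  obtain ⟨r, hr, hrh, hrodd⟩ := exists_irreducible_dvd_of_odd_natDegree hhodd
  refine ⟨r, hr, hrodd, ?_, hrh.mul_left p⟩
  have := natDegree_le_of_dvd hrh hh
  have := hlt j
  lia

theorem dvd_of_dvd_weightedSumSquares {w : ι → F} (hw : (weightedSumSquares F w).Anisotropic)
    {p : F[X]} (hp : Irreducible p) (hodd : Odd p.natDegree) {f : ι → F[X]}
    (hdvd : p ∣ weightedSumSquares F[X] w f) (i : ι) : p ∣ f i := by
  induction hn : p.natDegree using Nat.strong_induction_on generalizing p f i with
  | _ n ih =>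
  subst hn
  revert i
  by_contra hf
  obtain ⟨e, he, helt, hpe⟩ := exists_primitive_dvd_of_dvd _ hp hdvd hf
  have he0 : e ≠ 0 := by
    rintro rfl
    exact not_isUnit_zero (he 0 fun _ => dvd_rfl)
  obtain ⟨r, hr, hrodd, hrlt, hre⟩ :=
    exists_irreducible_dvd_weightedSumSquares_of_natDegree_lt hw hodd he0 helt hpe
  exact hr.not_isUnit (he r fun i => ih _ hrlt hr hrodd hre i rfl)

end Polynomial

section OddDegree

open Polynomial QuadraticMap IntermediateField

variable {F K ι : Type*} [Field F] [Field K] [Algebra F K] [Fintype ι] {w : ι → F}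

theorem eq_zero_of_weightedSumSquares_eq_zero_of_mem_adjoin_simple
    (hw : (weightedSumSquares F w).Anisotropic) {a : K} (hodd : Odd (minpoly F a).natDegree)
    {x : ι → K} (hxa : ∀ i, x i ∈ F⟮a⟯) (hx : weightedSumSquares K w x = 0) : x = 0 := by
  have ha : IsIntegral F a := by
    by_contra ha
    simp [minpoly.eq_zero ha] at hodd
  have hpoly (i : ι) : ∃ f : F[X], aeval a f = x i := by
    have hi : x i ∈ F⟮a⟯.toSubalgebra := hxa i
    rwa [adjoin_simple_toSubalgebra_of_isAlgebraic ha.isAlgebraic,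
      Algebra.adjoin_singleton_eq_range_aeval] at hi
  choose f hf using hpoly
  obtain rfl : (fun i => aeval a (f i)) = x := funext hf
  have hdvd : minpoly F a ∣ weightedSumSquares F[X] w f := by
    refine minpoly.dvd F a (Eq.trans ?_ hx)
    simp only [weightedSumSquares_apply, map_sum, map_smul, map_mul]
  exact funext fun i =>
    minpoly.dvd_iff.1 (dvd_of_dvd_weightedSumSquares hw (minpoly.irreducible ha) hodd hdvd i)

theorem anisotropic_weightedSumSquares_of_odd_finrank (hw : (weightedSumSquares F w).Anisotropic)
    (hodd : Odd (Module.finrank F K)) : (weightedSumSquares K w).Anisotropic := by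
  have : FiniteDimensional F K := Module.finite_of_finrank_pos hodd.pos
  suffices h : ∀ (L : IntermediateField F K) (x : ι → K), (∀ i, x i ∈ L) →
      weightedSumSquares K w x = 0 → x = 0 from fun x hx => h ⊤ x (fun _ => mem_top) hx
  intro L
  induction L using induction_on_adjoin with
  | base =>
    intro x hxbot hx
    choose y hy using fun i => mem_bot.1 (hxbot i)
    have hy0 : weightedSumSquares F w y = 0 := by
      apply (algebraMap F K).injective
      simpa [weightedSumSquares_apply, Algebra.smul_def, hy] using hx
    exact funext fun i => by rw [← hy, hw y hy0, Pi.zero_apply, map_zero, Pi.zero_apply]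
  | ih L a hL =>
    intro x hxLa hx
    have hwL : (weightedSumSquares L fun i => algebraMap F L (w i)).Anisotropic := by
      intro y hy
      have hyK : weightedSumSquares K w (fun i => (y i : K)) = 0 := by
        simpa [Algebra.smul_def] using congrArg (algebraMap L K) hy
      exact funext fun i => Subtype.ext (congrFun (hL _ (fun i => (y i).2) hyK) i)
    have hodda : Odd (minpoly L a).natDegree :=
      hodd.of_dvd_nat ((minpoly.degree_dvd (IsIntegral.of_finite L a)).trans
        (Dvd.intro_left _ (Module.finrank_mul_finrank F L K)))
    refine eq_zero_of_weightedSumSquares_eq_zero_of_mem_adjoin_simple hwL hodda hxLa ?_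
    simpa using hx

end OddDegree

section BaseChange

open QuadraticMap

open LinearMap (BilinForm)

theorem baseChange_weightedSumSquares {R A ι : Type*} [CommRing R] [Invertible (2 : R)]
    [CommRing A] [Algebra R A] [Fintype ι] [DecidableEq ι] (w : ι → R) :
    QuadraticForm.baseChange A (weightedSumSquares R w) =
      (weightedSumSquares A w).comp (piScalarRight R A A ι).toLinearMap := by
  ext x
  simp [Algebra.smul_def]

theorem quadraticForm_baseChange_comp {R A M N : Type*} [CommRing R] [Invertible (2 : R)]
    [CommRing A] [Algebra R A] [AddCommGroup M] [Module R M] [AddCommGroup N] [Module R N]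
    (Q : QuadraticForm R N) (f : M →ₗ[R] N) :
    QuadraticForm.baseChange A (Q.comp f) = (Q.baseChange A).comp (f.baseChange A) := by
  ext x
  simp

theorem anisotropic_comp {R M N P : Type*} [CommRing R] [AddCommGroup M] [Module R M]
    [AddCommGroup N] [Module R N] [AddCommGroup P] [Module R P]
    {Q : QuadraticMap R N P} (hQ : Q.Anisotropic) {f : M →ₗ[R] N} (hf : Function.Injective f) :
    (Q.comp f).Anisotropic :=
  fun x hx => (map_eq_zero_iff f hf).1 (hQ (f x) hx)

section Anisotropic

variable {F K V : Type*} [Field F] [Field K] [Algebra F K] [Invertible (2 : F)] [AddCommGroup V]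
  [Module F V] {Q : QuadraticForm F V}

theorem anisotropic_baseChange_of_finiteDimensional [FiniteDimensional F V] (hQ : Q.Anisotropic)
    (hodd : Odd (Module.finrank F K)) : (Q.baseChange K).Anisotropic := by
  obtain ⟨w, ⟨e⟩⟩ := QuadraticForm.equivalent_weightedSumSquares Q
  have hQe : Q = (weightedSumSquares F w).comp e.toLinearEquiv.toLinearMap :=
    QuadraticMap.ext fun x => (e.map_app x).symm
  have hw : (weightedSumSquares F w).Anisotropic := by
    intro x hx
    simpa using hQ (e.symm x) ((e.symm.map_app x).trans hx)
  rw [hQe, quadraticForm_baseChange_comp, baseChange_weightedSumSquares]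
  have hwK : (weightedSumSquares K w).Anisotropic :=
    anisotropic_weightedSumSquares_of_odd_finrank hw hodd
  exact anisotropic_comp (anisotropic_comp hwK (piScalarRight F K K _).injective)
    (e.toLinearEquiv.baseChange F K _ _).injective

theorem anisotropic_baseChange (hQ : Q.Anisotropic) (hodd : Odd (Module.finrank F K)) :
    (Q.baseChange K).Anisotropic := by
  intro x hx
  obtain ⟨M, _, hxM⟩ :=
    exists_finite_submodule_right_of_setFinite {x} (Set.finite_singleton x)
  obtain ⟨y, rfl⟩ := hxM rfl
  rw [← LinearMap.baseChange_eq_ltensor] at hx ⊢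
  rw [← QuadraticMap.comp_apply, ← quadraticForm_baseChange_comp] at hx
  have hM : (Q.comp M.subtype).Anisotropic := anisotropic_comp hQ M.injective_subtype
  rw [anisotropic_baseChange_of_finiteDimensional hM hodd y hx, map_zero]

end Anisotropic

theorem submodule_baseChange_sup {R M : Type*} (A : Type*) [CommSemiring R] [Semiring A]
    [Algebra R A] [AddCommMonoid M] [Module R M] (p q : Submodule R M) :
    (p ⊔ q).baseChange A = p.baseChange A ⊔ q.baseChange A := by
  rw [← p.span_eq, ← q.span_eq, ← Submodule.span_union, Submodule.baseChange_span, Set.image_union,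
    Submodule.span_union, Submodule.baseChange_span, Submodule.baseChange_span]

theorem orthogonal_baseChange_le {R M : Type*} (A : Type*) [CommRing R] [CommRing A] [Algebra R A]
    [Module.Free R A] [AddCommGroup M] [Module R M] (B : BilinForm R M) (W : Submodule R M) :
    (B.baseChange A).orthogonal (W.baseChange A) ≤ (B.orthogonal W).baseChange A := by
  intro x hx
  let b := Module.Free.chooseBasis R A
  obtain ⟨v, rfl⟩ := TensorProduct.eq_repr_basis_left b x
  refine Submodule.sum_mem _ fun i _ => Submodule.tmul_mem_baseChange_of_mem _ fun w hw => ?_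
  have hcomb : Finsupp.linearCombination R b (Finsupp.mapRange.linearMap (B w) v) = 0 := by
    have h := hx (1 ⊗ₜ w) (Submodule.tmul_mem_baseChange_of_mem 1 hw)
    simpa [_root_.map_finsuppSum, Finsupp.linearCombination_apply,
      Finsupp.sum_mapRange_index] using h
  exact DFunLike.congr_fun (linearIndependent_iff.1 b.linearIndependent _ hcomb) i

end BaseChange

section TotallyIsotropic

open QuadraticMap

open LinearMap (BilinForm)

/-- A submodule is totally isotropic for `Q` if `Q` itself, and not only its polar form, vanishes
on it. The Witt index is the largest dimension of such a subspace. -/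
def IsTotallyIsotropic {R M : Type*} [CommRing R] [AddCommGroup M] [Module R M]
    (Q : QuadraticForm R M) (W : Submodule R M) : Prop :=
  ∀ x ∈ W, Q x = 0

section CommRing

variable {R M : Type*} [CommRing R] [AddCommGroup M] [Module R M]
  {Q : QuadraticForm R M} {W : Submodule R M}

theorem IsTotallyIsotropic.polar_eq_zero (hW : IsTotallyIsotropic Q W) {x y : M} (hx : x ∈ W)
    (hy : y ∈ W) : polar Q x y = 0 := by
  rw [polar, hW _ (W.add_mem hx hy), hW x hx, hW y hy, sub_zero, sub_zero]

theorem IsTotallyIsotropic.le_orthogonal (hW : IsTotallyIsotropic Q W) :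
    W ≤ BilinForm.orthogonal Q.polarBilin W :=
  fun _ hx _ hy => hW.polar_eq_zero hy hx

theorem IsTotallyIsotropic.sup_span_singleton (hW : IsTotallyIsotropic Q W) {x : M} (hx : Q x = 0)
    (hxW : x ∈ BilinForm.orthogonal Q.polarBilin W) : IsTotallyIsotropic Q (W ⊔ R ∙ x) := by
  intro y hy
  obtain ⟨w, hw, z, hz, rfl⟩ := Submodule.mem_sup.1 hy
  obtain ⟨c, rfl⟩ := Submodule.mem_span_singleton.1 hz
  have hpolar : polar Q w x = 0 := hxW w hw
  rw [QuadraticMap.map_add Q, QuadraticMap.map_smul, polar_smul_right, hW w hw, hx, hpolar]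
  simp

theorem maximal_isTotallyIsotropic_iff :
    Maximal (IsTotallyIsotropic Q) W ↔ IsTotallyIsotropic Q W ∧
      ∀ x ∈ BilinForm.orthogonal Q.polarBilin W, Q x = 0 → x ∈ W := by
  refine ⟨fun hW => ⟨hW.prop, fun x hxW hx => ?_⟩, fun ⟨hW, h⟩ => ⟨hW, fun U hU hWU x hx => ?_⟩⟩
  · exact hW.le_of_ge (hW.prop.sup_span_singleton hx hxW) le_sup_left
      (Submodule.mem_sup_right (Submodule.mem_span_singleton_self x))
  · exact h x (fun w hw => hU.polar_eq_zero (hWU hw) hx) (hU x hx)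

variable (Q) in
theorem exists_maximal_isTotallyIsotropic : ∃ W, Maximal (IsTotallyIsotropic Q) W := by
  refine zorn_le₀ {W | IsTotallyIsotropic Q W} fun c hc hchain => ?_
  rcases c.eq_empty_or_nonempty with rfl | hne
  · exact ⟨⊥, by simp [IsTotallyIsotropic], by simp⟩
  · refine ⟨sSup c, fun x hx => ?_, fun _ => le_sSup⟩
    obtain ⟨W, hWc, hxW⟩ := (Submodule.mem_sSup_of_directed hne hchain.directedOn).1 hx
    exact hc hWc x hxW

theorem IsTotallyIsotropic.baseChange (A : Type*) [CommRing A] [Algebra R A] [Invertible (2 : R)]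
    (hW : IsTotallyIsotropic Q W) : IsTotallyIsotropic (Q.baseChange A) (W.baseChange A) := by
  have hzero : (Q.baseChange A).comp (W.subtype.baseChange A) = 0 := by
    ext x
    simp [hW x x.2]
  rintro _ ⟨x, rfl⟩
  exact DFunLike.congr_fun hzero x

end CommRing

section Field

variable {F V : Type*} [Field F] [AddCommGroup V] [Module F V] {Q : QuadraticForm F V}
  {W U : Submodule F V}

theorem finrank_le_of_orthogonal_inf_le [FiniteDimensional F W] (B : BilinForm F V)
    (hU : ∀ x ∈ U, ∀ y ∈ U, B x y = 0) (hle : B.orthogonal W ⊓ U ≤ W) :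
    Module.finrank F U ≤ Module.finrank F W := by
  by_cases hfin : FiniteDimensional F U
  swap
  · exact (Module.finrank_of_not_finite hfin).trans_le (Nat.zero_le _)
  let φ : U →ₗ[F] Module.Dual F W := B.flip.domRestrict₁₂ U W
  let S : Submodule F W := U.comap W.subtype
  have hker : Module.finrank F φ.ker ≤ Module.finrank F S := by
    rw [← Submodule.finrank_map_subtype_eq U φ.ker, ← Submodule.finrank_map_subtype_eq W S]
    refine Submodule.finrank_mono ?_
    rintro _ ⟨u, hu, rfl⟩
    have huW : (u : V) ∈ W := hle ⟨fun w hw => LinearMap.congr_fun hu ⟨w, hw⟩, u.2⟩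
    exact ⟨⟨u, huW⟩, u.2, rfl⟩
  have hrange : φ.range ≤ S.dualAnnihilator := by
    rintro _ ⟨u, rfl⟩
    exact (Submodule.mem_dualAnnihilator _).2 fun w hw => hU w hw u u.2
  calc Module.finrank F U = Module.finrank F φ.range + Module.finrank F φ.ker :=
        φ.finrank_range_add_finrank_ker.symm
    _ ≤ Module.finrank F S.dualAnnihilator + Module.finrank F S :=
        add_le_add (Submodule.finrank_mono hrange) hker
    _ = Module.finrank F W := by
        rw [add_comm, Subspace.finrank_add_finrank_dualAnnihilator_eq]

theorem wittIndex_eq_finrank (hW : Maximal (IsTotallyIsotropic Q) W) [FiniteDimensional F W] :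
    wittIndex F Q = Module.finrank F W := by
  refine IsGreatest.csSup_eq ⟨⟨W, hW.prop, rfl⟩, ?_⟩
  rintro _ ⟨U, hU, rfl⟩
  refine finrank_le_of_orthogonal_inf_le Q.polarBilin
    (fun _ hx _ hy => IsTotallyIsotropic.polar_eq_zero hU hx hy) ?_
  rintro x ⟨hxW, hxU⟩
  exact (maximal_isTotallyIsotropic_iff.1 hW).2 x hxW (hU x hxU)

theorem exists_anisotropic_sup_eq_orthogonal (hW : Maximal (IsTotallyIsotropic Q) W) :
    ∃ A : Submodule F V, (Q.restrict A).Anisotropic ∧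
      W ⊔ A = BilinForm.orthogonal Q.polarBilin W := by
  obtain ⟨A, hdisj, hsup⟩ := IsModularLattice.exists_disjoint_and_sup_eq hW.prop.le_orthogonal
  refine ⟨A, fun a ha => ?_, hsup⟩
  have haW : (a : V) ∈ W :=
    (maximal_isTotallyIsotropic_iff.1 hW).2 a (hsup ▸ Submodule.mem_sup_right a.2) ha
  exact Subtype.ext (Submodule.disjoint_def.1 hdisj a haW a.2)

theorem maximal_isTotallyIsotropic_baseChange {K : Type*} [Field K] [Algebra F K]
    [Invertible (2 : F)] (hW : Maximal (IsTotallyIsotropic Q) W) (hodd : Odd (Module.finrank F K)) :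
    Maximal (IsTotallyIsotropic (Q.baseChange K)) (W.baseChange K) := by
  have : Invertible (2 : K) := (Invertible.map (algebraMap F K) 2).copy 2 (map_ofNat _ _).symm
  have hWK : IsTotallyIsotropic (Q.baseChange K) (W.baseChange K) := hW.prop.baseChange K
  refine maximal_isTotallyIsotropic_iff.2 ⟨hWK, fun x hxW hx => ?_⟩
  obtain ⟨A, hA, hsup⟩ := exists_anisotropic_sup_eq_orthogonal hW
  have hxsup : x ∈ W.baseChange K ⊔ A.baseChange K := by
    rw [← submodule_baseChange_sup, hsup]
    rw [QuadraticForm.polarBilin_baseChange] at hxW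
    exact orthogonal_baseChange_le K Q.polarBilin W hxW
  obtain ⟨y, hy, _, ⟨z, rfl⟩, rfl⟩ := Submodule.mem_sup.1 hxsup
  have hz : (QuadraticForm.baseChange K (Q.comp A.subtype)) z = 0 := by
    rw [quadraticForm_baseChange_comp, QuadraticMap.comp_apply]
    have hpolar : polar (Q.baseChange K) y (A.subtype.baseChange K z) = 0 := by
      have h := hxW y hy
      rwa [map_add, polarBilin_apply_apply, polarBilin_apply_apply, hWK.polar_eq_zero hy hy,
        zero_add] at h
    rwa [QuadraticMap.map_add (Q.baseChange K), hWK y hy, hpolar, zero_add, add_zero] at hx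
  have hz0 : z = 0 := anisotropic_baseChange hA hodd z hz
  rw [hz0, map_zero, add_zero]
  exact hy

theorem finrank_submodule_baseChange (K : Type*) [Field K] [Algebra F K] (W : Submodule F V) :
    Module.finrank K (W.baseChange K) = Module.finrank F W := by
  rw [← (Submodule.toBaseChange.toLinearEquiv K W).finrank_eq, Module.finrank_baseChange]

end Field

end TotallyIsotropic

theorem wittIndex_odd_extension_general {F V F' : Type*} [Field F] [Invertible (2 : F)]
    [AddCommGroup V] [Module F V] (Q : QuadraticForm F V)
    (hfin : ∀ W : Submodule F V, IsTotallyIsotropic Q W → FiniteDimensional F W)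
    [Field F'] [Algebra F F'] (hodd : Odd (Module.finrank F F')) :
    wittIndex F' (Q.baseChange F') = wittIndex F Q := by
  obtain ⟨W, hW⟩ := exists_maximal_isTotallyIsotropic Q
  have : FiniteDimensional F W := hfin W hW.prop
  have : FiniteDimensional F' (W.baseChange F') :=
    Module.Finite.equiv (Submodule.toBaseChange.toLinearEquiv F' W)
  calc wittIndex F' (Q.baseChange F') = Module.finrank F' (W.baseChange F') :=
        wittIndex_eq_finrank (maximal_isTotallyIsotropic_baseChange hW hodd)
    _ = Module.finrank F W := finrank_submodule_baseChange F' W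
    _ = wittIndex F Q := (wittIndex_eq_finrank hW).symm

/-- Springer's theorem: the Witt index of a nondegenerate quadratic form is unchanged
under an odd-degree field extension (char F ≠ 2). -/
theorem wittIndex_odd_extension
    (F : Type) [Field F] [Invertible (2 : F)]
    (V : Type) [AddCommGroup V] [Module F V] [FiniteDimensional F V]
    (Q : QuadraticForm F V)
    (hQ : LinearMap.BilinForm.Nondegenerate (QuadraticMap.associated (R := F) Q))
    (F' : Type) [Field F'] [Algebra F F'] [FiniteDimensional F F']
    (hodd : Odd (Module.finrank F F')) :
    wittIndex F' (Q.baseChange F') = wittIndex F Q :=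
  wittIndex_odd_extension_general Q (fun _ _ => inferInstance) hodd
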